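/- arXiv:2206.09348 — 3 statements merged into one kernel-verified Lean document; each statement's English description precedes it below -/
import Mathlib

section
/- For every class C of level l ∈ {1,…,L} and every p ∈ Δ(X), the nested entropy decomposes as h_C(p) = ∑_{C'} h(p | C') + μ^l · p_C log p_C, where the sum runs over all classes C' of level ≥ l with C' ⊆ C. Consequently, if p is supported in C (i.e., p_C = 1), then h_C(p) = ∑_{C'} h(p | C'), the sum again over all classes C' of level ≥ l with C' ⊆ C. -/
/-!
Write `A m` for the sum of `xlogx (pC p C')` over the level-`m` classes `C'` inside the fixed class
`C` of level `l`. The logarithm of a quotient splits `h(p | C')`, and since the children of `C'`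
partition `C'` (`sum_pC_children`), summing over all level-`m` classes `C' ⊆ C` gives
`μ (m + 1) * (A (m + 1) - A m)` (`sum_condEnt_level`). Summation by parts (`abel_sum`), with
`μ (L + 1) = 0`, turns the sum of these over `m` into the nested entropy, up to the boundary term
`μ l * A l`, and `A l = xlogx (pC p C)` because `C` is the only level-`l` class inside `C`.
-/

noncomputable section

namespace NestedBandits

/-- A similarity structure of depth `L ≥ 1` on a finite set `X`, encoded by the map
`cls l x` = the similarity class of level `l` containing `x`. -/
structure SimStruct (X : Type*) [Fintype X] [DecidableEq X] where
  L : ℕ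
  one_le_L : 1 ≤ L
  cls : ℕ → X → Finset X
  mem_cls : ∀ l x, x ∈ cls l x
  cls_zero : ∀ x, cls 0 x = Finset.univ
  cls_L : ∀ x, cls L x = {x}
  cls_congr : ∀ l x z, z ∈ cls l x → cls l z = cls l x
  cls_refines : ∀ l x, l < L → cls (l + 1) x ⊆ cls l x

variable {X : Type*} [Fintype X] [DecidableEq X]

/-- The probability `p_C` of a class `C`. -/
def pC (p : X → ℝ) (C : Finset X) : ℝ := ∑ x ∈ C, p x

/-- The simplex `Δ(X)` of probability vectors on `X`. -/
def simplex (X : Type*) [Fintype X] : Set (X → ℝ) :=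
  {p | (∀ x, 0 ≤ p x) ∧ ∑ x, p x = 1}

/-- `t * log t`, with the convention `0 * log 0 = 0` (automatic since `Real.log 0 = 0`). -/
def xlogx (t : ℝ) : ℝ := t * Real.log t

/-- Auxiliary class score: `k` is the number of levels below the class (so the class has
level `S.L - k`). -/
def scoreAux (S : SimStruct X) (μ : ℕ → ℝ) (y : X → ℝ) : ℕ → Finset X → ℝ
  | 0, C => ∑ x ∈ C, y x
  | k + 1, C =>
      μ (S.L - k) *
        Real.log (∑ C' ∈ C.image (S.cls (S.L - k)), Real.exp (scoreAux S μ y k C' / μ (S.L - k)))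

/-- The class score `y_C` of a class `C` of level `l`. -/
def score (S : SimStruct X) (μ : ℕ → ℝ) (y : X → ℝ) (l : ℕ) (C : Finset X) : ℝ :=
  scoreAux S μ y (S.L - l) C

/-- The nested choice probability `P_{x | C}(y)` where `C = S.cls l x` is the level-`l`
class of `x`: the product of the conditional choice probabilities along the chain of
classes from `C` down to `{x}`. -/
def condProb (S : SimStruct X) (μ : ℕ → ℝ) (y : X → ℝ) (l : ℕ) (x : X) : ℝ :=
  ∏ l' ∈ Finset.Ico l S.L,
    Real.exp ((score S μ y (l' + 1) (S.cls (l' + 1) x) - score S μ y l' (S.cls l' x)) / μ (l' + 1))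

/-- The nested entropy `h_C(p)` of a class `C` of level `l`. -/
def nestEnt (S : SimStruct X) (μ : ℕ → ℝ) (p : X → ℝ) (l : ℕ) (C : Finset X) : ℝ :=
  ∑ l' ∈ Finset.Icc (max l 1) S.L,
    (μ l' - μ (l' + 1)) * ∑ C' ∈ C.image (S.cls l'), xlogx (pC p C')

/-- The conditional entropy `h(p | C)` of a class `C` of level `l`. -/
def condEnt (S : SimStruct X) (μ : ℕ → ℝ) (p : X → ℝ) (l : ℕ) (C : Finset X) : ℝ :=
  if l < S.L then
    μ (l + 1) * ∑ C' ∈ C.image (S.cls (l + 1)), pC p C' * (Real.log (pC p C') - Real.log (pC p C))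
  else 0

/-- Auxiliary nested power sum: `k = S.L - l ≥ 1` levels below the class. -/
def npsAux (S : SimStruct X) (μ : ℕ → ℝ) (y c : X → ℝ) : ℕ → Finset X → ℝ
  | 0, _ => 0
  | 1, C => ∑ x ∈ C, condProb S μ y (S.L - 1) x * Real.exp (-c x / μ S.L)
  | k + 2, C =>
      ∑ C' ∈ C.image (S.cls (S.L - (k + 1))),
        Real.exp ((score S μ y (S.L - (k + 1)) C' - score S μ y (S.L - (k + 2)) C) /
            μ (S.L - (k + 1))) *
          npsAux S μ y c (k + 1) C' ^ (μ (S.L - k) / μ (S.L - (k + 1)))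

/-- The nested power sum `σ_{c,y}(C)` for a class `C` of level `l < S.L`. -/
def nps (S : SimStruct X) (μ : ℕ → ℝ) (y c : X → ℝ) (l : ℕ) (C : Finset X) : ℝ :=
  npsAux S μ y c (S.L - l) C

/-- The Fenchel coupling `F(p, y) = h(p) + y_X - ⟨y, p⟩`. -/
def fench (S : SimStruct X) (μ : ℕ → ℝ) (p y : X → ℝ) : ℝ :=
  nestEnt S μ p 0 Finset.univ + score S μ y 0 Finset.univ - ∑ x, y x * p x

/-- The effective number of alternatives `N_eff = (∑_l √(N^l) R̄_l)²`. -/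
def Neff (S : SimStruct X) (R : ℕ → Finset X → ℝ) : ℝ :=
  (∑ l ∈ Finset.Icc 1 S.L,
      Real.sqrt ((Finset.univ.image (S.cls l)).card) *
        Real.sqrt ((∑ C ∈ Finset.univ.image (S.cls l), R l C ^ 2) /
          ((Finset.univ.image (S.cls l)).card))) ^ 2

lemma cls_subset_of_le (S : SimStruct X) {l m : ℕ} (hlm : l ≤ m) (hm : m ≤ S.L) (x : X) :
    S.cls m x ⊆ S.cls l x := by
  induction m, hlm using Nat.le_induction with
  | base => exact subset_rfl
  | succ m _ ih => exact (S.cls_refines m x (by omega)).trans (ih (by omega))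

lemma cls_image_self (S : SimStruct X) (l : ℕ) (x : X) :
    (S.cls l x).image (S.cls l) = {S.cls l x} := by
  ext D
  simp only [Finset.mem_image, Finset.mem_singleton]
  constructor
  · rintro ⟨z, hz, rfl⟩
    exact S.cls_congr l x z hz
  · rintro rfl
    exact ⟨x, S.mem_cls l x, rfl⟩

/-- The children of a class partition it, so their probabilities add up. -/
lemma sum_pC_children (S : SimStruct X) (p : X → ℝ) {m : ℕ} (hm : m < S.L) (x : X) :
    ∑ C' ∈ (S.cls m x).image (S.cls (m + 1)), pC p C' = pC p (S.cls m x) := by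
  refine Finset.sum_image' p fun z hz => ?_
  unfold pC
  refine Finset.sum_congr ?_ fun _ _ => rfl
  ext w
  simp only [Finset.mem_filter]
  constructor
  · intro hw
    refine ⟨?_, S.cls_congr _ _ _ hw⟩
    rw [← S.cls_congr m x z hz]
    exact S.cls_refines m z hm hw
  · rintro ⟨_, h⟩
    rw [← h]
    exact S.mem_cls _ _

/-- Every level-`(m + 1)` class inside `C` has exactly one parent among the level-`m` classes
inside `C`, so a sum over parents and then children is a sum over level `m + 1`. -/
lemma sum_children (S : SimStruct X) (f : Finset X → ℝ) {l m : ℕ} (hlm : l ≤ m) (hm : m < S.L)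
    (x : X) :
    ∑ C' ∈ (S.cls l x).image (S.cls m), ∑ D ∈ C'.image (S.cls (m + 1)), f D =
      ∑ D ∈ (S.cls l x).image (S.cls (m + 1)), f D := by
  rw [← Finset.sum_biUnion]
  · refine Finset.sum_congr ?_ fun _ _ => rfl
    ext D
    simp only [Finset.mem_biUnion, Finset.mem_image]
    constructor
    · rintro ⟨_, ⟨z, hz, rfl⟩, w, hw, rfl⟩
      refine ⟨w, ?_, rfl⟩
      rw [← S.cls_congr l x z hz]
      exact cls_subset_of_le S hlm hm.le z hw
    · rintro ⟨w, hw, rfl⟩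
      exact ⟨_, ⟨w, hw, rfl⟩, w, S.mem_cls m w, rfl⟩
  · intro C₁ h₁ C₂ h₂ hne
    simp only [Finset.coe_image, Set.mem_image] at h₁ h₂
    obtain ⟨z₁, _, rfl⟩ := h₁
    obtain ⟨z₂, _, rfl⟩ := h₂
    refine Finset.disjoint_left.2 fun D hD₁ hD₂ => hne ?_
    obtain ⟨w₁, hw₁, rfl⟩ := Finset.mem_image.1 hD₁
    obtain ⟨w₂, hw₂, h⟩ := Finset.mem_image.1 hD₂
    have hw : w₂ ∈ S.cls m w₁ := S.cls_refines m w₁ hm (h ▸ S.mem_cls (m + 1) w₂)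
    rw [← S.cls_congr m z₁ w₁ hw₁, ← S.cls_congr m z₂ w₂ hw₂, S.cls_congr m w₁ w₂ hw]

lemma condEnt_cls (S : SimStruct X) (μ : ℕ → ℝ) (p : X → ℝ) {m : ℕ} (hm : m < S.L) (x : X) :
    condEnt S μ p m (S.cls m x) =
      μ (m + 1) * (∑ D ∈ (S.cls m x).image (S.cls (m + 1)), xlogx (pC p D) -
        xlogx (pC p (S.cls m x))) := by
  rw [condEnt, if_pos hm]
  simp only [mul_sub, Finset.sum_sub_distrib, ← Finset.sum_mul, sum_pC_children S p hm x, xlogx]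

lemma sum_condEnt_level (S : SimStruct X) (μ : ℕ → ℝ) (p : X → ℝ) {l m : ℕ} (hlm : l ≤ m)
    (hm : m < S.L) (x : X) :
    ∑ C' ∈ (S.cls l x).image (S.cls m), condEnt S μ p m C' =
      μ (m + 1) * (∑ D ∈ (S.cls l x).image (S.cls (m + 1)), xlogx (pC p D) -
        ∑ C' ∈ (S.cls l x).image (S.cls m), xlogx (pC p C')) := by
  rw [← sum_children S _ hlm hm, ← Finset.sum_sub_distrib, Finset.mul_sum]
  refine Finset.sum_congr rfl fun C' hC' => ?_
  obtain ⟨z, _, rfl⟩ := Finset.mem_image.1 hC'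
  exact condEnt_cls S μ p hm z

lemma abel_sum (μ A : ℕ → ℝ) {l n : ℕ} (h : l ≤ n) :
    ∑ m ∈ Finset.Icc l n, (μ m - μ (m + 1)) * A m =
      ∑ m ∈ Finset.Ico l n, μ (m + 1) * (A (m + 1) - A m) + μ l * A l - μ (n + 1) * A n := by
  induction n, h using Nat.le_induction with
  | base => simp [sub_mul]
  | succ n h ih =>
    rw [Finset.sum_Icc_succ_top (by omega), Finset.sum_Ico_succ_top h, ih]
    ring

theorem stmt0 (S : SimStruct X) (μ : ℕ → ℝ)
    (hμ_mono : ∀ l : ℕ, 1 ≤ l → l < S.L → μ (l + 1) ≤ μ l)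
    (hμ_pos : 0 < μ S.L) (hμ_last : μ (S.L + 1) = 0)
    (l : ℕ) (hl1 : 1 ≤ l) (hlL : l ≤ S.L) (x₀ : X) (p : X → ℝ) (hp : p ∈ simplex X) :
    nestEnt S μ p l (S.cls l x₀) =
      (∑ l' ∈ Finset.Icc l S.L, ∑ C' ∈ (S.cls l x₀).image (S.cls l'), condEnt S μ p l' C') +
        μ l * xlogx (pC p (S.cls l x₀)) ∧
    (pC p (S.cls l x₀) = 1 →
      nestEnt S μ p l (S.cls l x₀) =
        ∑ l' ∈ Finset.Icc l S.L, ∑ C' ∈ (S.cls l x₀).image (S.cls l'), condEnt S μ p l' C') := by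
  have key : nestEnt S μ p l (S.cls l x₀) =
      (∑ l' ∈ Finset.Icc l S.L, ∑ C' ∈ (S.cls l x₀).image (S.cls l'), condEnt S μ p l' C') +
        μ l * xlogx (pC p (S.cls l x₀)) := by
    rw [nestEnt, max_eq_left hl1,
      abel_sum μ (fun m => ∑ C' ∈ (S.cls l x₀).image (S.cls m), xlogx (pC p C')) hlL, hμ_last,
      cls_image_self, Finset.sum_singleton, zero_mul, sub_zero]
    congr 1
    -- Level `L` contributes nothing: `condEnt` vanishes there by definition.
    rw [← Finset.Ico_insert_right hlL, Finset.sum_insert Finset.right_notMem_Ico,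
      Finset.sum_eq_zero (s := (S.cls l x₀).image (S.cls S.L)) fun C' _ => by simp [condEnt],
      zero_add]
    refine Finset.sum_congr rfl fun m hm => ?_
    rw [Finset.mem_Ico] at hm
    exact (sum_condEnt_level S μ p hm.1 hm.2 x₀).symm
  refine ⟨key, fun h => ?_⟩
  rw [key, h]
  simp [xlogx]

end NestedBandits
end
end

section
/- For every class C of level l ∈ {0,…,L} and every y ∈ R^X, the maximum of p ↦ ∑_{x∈X} y_x p_x − h_C(p) over {p ∈ Δ(X) : supp(p) ⊆ C} is attained at the unique point p* given by p*_x = P_{x|C}(y) for x ∈ C and p*_x = 0 for x ∉ C. -/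
/-!
For `x` in the class `C` of level `l`, taking logarithms of the conditional choice probabilities and
summing by parts along the chain of classes of `x` gives
`y_x - y_C = ∑_j (μ^j - μ^(j+1)) log p*_{C_j(x)}`, where `C_j(x)` is the level-`j` class of `x`
and `p*` is the nested choice probability vector. Since also
`h_C(p) = ∑_j (μ^j - μ^(j+1)) ∑_x p_x log p_{C_j(x)}`, every `p` supported in `C` satisfies
`⟨y, p⟩ - h_C(p) = y_C - ∑_j (μ^j - μ^(j+1)) D_j(p)` (`objective_eq`), where `D_j(p)` is the
relative entropy of `p` with respect to `p*` after both are coarsened to the classes of level `j`.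
Each coefficient is nonnegative and each `D_j(p)` is nonnegative by Gibbs' inequality
(`relEnt_nonneg`), so the maximum is `y_C`, attained at `p*`. The coefficient of the finest level
`j = L` is `μ^L > 0`, and `D_L(p) = 0` forces `p = p*` (`eq_of_relEnt_L_eq_zero`).
-/

noncomputable section

namespace NestedBandits

variable {X : Type*} [Fintype X] [DecidableEq X]

/-! ### Classes -/

lemma cls_subset (S : SimStruct X) {l n : ℕ} (hln : l ≤ n) (hn : n ≤ S.L) (x : X) :
    S.cls n x ⊆ S.cls l x := by
  induction n, hln using Nat.le_induction with
  | base => exact subset_rfl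
  | succ n hln ih => exact (S.cls_refines n x (by omega)).trans (ih (by omega))

lemma cls_eq_of_mem (S : SimStruct X) {l n : ℕ} (hln : l ≤ n) (hn : n ≤ S.L) {x z : X}
    (hz : z ∈ S.cls n x) : S.cls l z = S.cls l x :=
  S.cls_congr l x z (cls_subset S hln hn x hz)

lemma filter_cls (S : SimStruct X) {l n : ℕ} (hln : l ≤ n) (hn : n ≤ S.L) {x₀ x : X}
    (hx : x ∈ S.cls l x₀) :
    (S.cls l x₀).filter (fun z => S.cls n z = S.cls n x) = S.cls n x := by
  ext z
  simp only [Finset.mem_filter]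
  constructor
  · rintro ⟨-, h⟩
    exact h ▸ S.mem_cls n z
  · intro h
    refine ⟨?_, S.cls_congr n x z h⟩
    rw [← S.cls_congr l x₀ x hx]
    exact cls_subset S hln hn x h

/-- A sum over a class can be grouped by its subclasses of level `n`. -/
lemma sum_image_cls (S : SimStruct X) {l n : ℕ} (hln : l ≤ n) (hn : n ≤ S.L) (x₀ : X)
    (p : X → ℝ) (F : Finset X → ℝ) :
    ∑ C' ∈ (S.cls l x₀).image (S.cls n), F C' * pC p C' =
      ∑ x ∈ S.cls l x₀, p x * F (S.cls n x) := by
  refine Finset.sum_image' (fun x => p x * F (S.cls n x)) fun x hx => ?_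
  rw [filter_cls S hln hn hx, pC, Finset.mul_sum]
  refine Finset.sum_congr rfl fun z hz => ?_
  rw [S.cls_congr n x z hz, mul_comm]

/-! ### Choice probabilities -/

/-- The log-probability `log P_{C_n(x) | C_l(x)}(y)` of reaching the level-`n` class of `x` from
its level-`l` class. -/
def logProb (S : SimStruct X) (μ : ℕ → ℝ) (y : X → ℝ) (l n : ℕ) (x : X) : ℝ :=
  ∑ j ∈ Finset.Ico l n,
    (score S μ y (j + 1) (S.cls (j + 1) x) - score S μ y j (S.cls j x)) / μ (j + 1)

lemma condProb_eq_exp (S : SimStruct X) (μ : ℕ → ℝ) (y : X → ℝ) (l : ℕ) (x : X) :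
    condProb S μ y l x = Real.exp (logProb S μ y l S.L x) := by
  rw [condProb, logProb, Real.exp_sum]

lemma condProb_pos (S : SimStruct X) (μ : ℕ → ℝ) (y : X → ℝ) (l : ℕ) (x : X) :
    0 < condProb S μ y l x := by
  rw [condProb_eq_exp]
  exact Real.exp_pos _

lemma condProb_split (S : SimStruct X) (μ : ℕ → ℝ) (y : X → ℝ) {l n : ℕ} (hln : l ≤ n)
    (hn : n ≤ S.L) (x : X) :
    condProb S μ y l x = Real.exp (logProb S μ y l n x) * condProb S μ y n x := by
  rw [condProb_eq_exp, condProb_eq_exp, ← Real.exp_add, logProb, logProb, logProb,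
    Finset.sum_Ico_consecutive _ hln hn]

lemma logProb_congr (S : SimStruct X) (μ : ℕ → ℝ) (y : X → ℝ) {l n : ℕ}
    (hn : n ≤ S.L) {x z : X} (hz : z ∈ S.cls n x) :
    logProb S μ y l n z = logProb S μ y l n x := by
  refine Finset.sum_congr rfl fun j hj => ?_
  rw [Finset.mem_Ico] at hj
  rw [cls_eq_of_mem S (by omega : j + 1 ≤ n) hn hz, cls_eq_of_mem S (by omega : j ≤ n) hn hz]

lemma mu_pos (S : SimStruct X) (μ : ℕ → ℝ)
    (hμ_mono : ∀ l : ℕ, 1 ≤ l → l < S.L → μ (l + 1) ≤ μ l)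
    (hμ_pos : 0 < μ S.L) {j : ℕ} (hj : 1 ≤ j) (hjL : j ≤ S.L) : 0 < μ j := by
  induction hjL using Nat.decreasingInduction with
  | self => exact hμ_pos
  | of_succ j hjL ih => exact (ih (by omega)).trans_le (hμ_mono j hj hjL)

lemma score_L (S : SimStruct X) (μ : ℕ → ℝ) (y : X → ℝ) (x : X) :
    score S μ y S.L (S.cls S.L x) = y x := by
  simp [score, S.cls_L, scoreAux]

lemma score_lt (S : SimStruct X) (μ : ℕ → ℝ) (y : X → ℝ) {l : ℕ} (hl : l < S.L)
    (C : Finset X) :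
    score S μ y l C = μ (l + 1) * Real.log
      (∑ C' ∈ C.image (S.cls (l + 1)), Real.exp (score S μ y (l + 1) C' / μ (l + 1))) := by
  obtain ⟨k, hk⟩ : ∃ k, S.L = l + 1 + k := ⟨S.L - (l + 1), by omega⟩
  have h1 : S.L - l = k + 1 := by omega
  have h2 : S.L - (l + 1) = k := by omega
  have h3 : S.L - k = l + 1 := by omega
  simp only [score, h1, h2, scoreAux, h3]

/-- The conditional choice probabilities of the children of a class sum to one. -/
lemma sum_exp_children (S : SimStruct X) (μ : ℕ → ℝ) (y : X → ℝ) {l : ℕ} (hl : l < S.L)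
    (hμ : 0 < μ (l + 1)) (x : X) :
    ∑ C' ∈ (S.cls l x).image (S.cls (l + 1)),
      Real.exp ((score S μ y (l + 1) C' - score S μ y l (S.cls l x)) / μ (l + 1)) = 1 := by
  have hpos : 0 < ∑ C' ∈ (S.cls l x).image (S.cls (l + 1)),
      Real.exp (score S μ y (l + 1) C' / μ (l + 1)) :=
    Finset.sum_pos (fun _ _ => Real.exp_pos _) ⟨_, Finset.mem_image_of_mem _ (S.mem_cls l x)⟩
  simp only [sub_div, Real.exp_sub, ← Finset.sum_div]
  rw [score_lt S μ y hl, mul_div_cancel_left₀ _ hμ.ne', Real.exp_log hpos, div_self hpos.ne']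

lemma sum_condProb (S : SimStruct X) (μ : ℕ → ℝ) (y : X → ℝ)
    (hμ : ∀ j, 1 ≤ j → j ≤ S.L → 0 < μ j) {l : ℕ} (hl : l ≤ S.L) (x : X) :
    ∑ z ∈ S.cls l x, condProb S μ y l z = 1 := by
  induction hl using Nat.decreasingInduction generalizing x with
  | self => simp [S.cls_L, condProb]
  | of_succ l hl ih =>
    rw [← sum_exp_children S μ y hl (hμ _ (by omega) hl) x]
    symm
    refine Finset.sum_image' (fun z => condProb S μ y l z) fun z hz => ?_
    rw [filter_cls S (Nat.le_succ l) hl hz]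
    calc _ = Real.exp (logProb S μ y l (l + 1) z) *
          ∑ w ∈ S.cls (l + 1) z, condProb S μ y (l + 1) w := by
            rw [ih, mul_one, logProb, Nat.Ico_succ_singleton, Finset.sum_singleton,
              S.cls_congr l x z hz]
      _ = _ := by
            rw [Finset.mul_sum]
            refine Finset.sum_congr rfl fun w hw => ?_
            rw [condProb_split S μ y (Nat.le_succ l) hl w, logProb_congr S μ y hl hw]

/-- The nested choice probability vector `p*` conditioned on the level-`l` class of `x₀`. -/
def pStar (S : SimStruct X) (μ : ℕ → ℝ) (y : X → ℝ) (l : ℕ) (x₀ : X) : X → ℝ :=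
  fun x => if x ∈ S.cls l x₀ then condProb S μ y l x else 0

lemma pStar_of_mem (S : SimStruct X) (μ : ℕ → ℝ) (y : X → ℝ) {l : ℕ} {x₀ x : X}
    (hx : x ∈ S.cls l x₀) : pStar S μ y l x₀ x = condProb S μ y l x := if_pos hx

lemma pC_pStar (S : SimStruct X) (μ : ℕ → ℝ) (y : X → ℝ)
    (hμ : ∀ j, 1 ≤ j → j ≤ S.L → 0 < μ j) {l n : ℕ} (hln : l ≤ n) (hn : n ≤ S.L) {x₀ x : X}
    (hx : x ∈ S.cls l x₀) :
    pC (pStar S μ y l x₀) (S.cls n x) = Real.exp (logProb S μ y l n x) := by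
  rw [pC, ← mul_one (Real.exp _), ← sum_condProb S μ y hμ hn x, Finset.mul_sum]
  refine Finset.sum_congr rfl fun z hz => ?_
  have hzl : z ∈ S.cls l x₀ := by
    rw [← S.cls_congr l x₀ x hx]
    exact cls_subset S hln hn x hz
  rw [pStar_of_mem S μ y hzl, condProb_split S μ y hln hn, logProb_congr S μ y hn hz]

lemma sum_eq_of_supp {C : Finset X} {p : X → ℝ} (hp : ∀ x, p x ≠ 0 → x ∈ C) (f : X → ℝ) :
    ∑ x, f x * p x = ∑ x ∈ C, f x * p x := by
  symm
  refine Finset.sum_subset (Finset.subset_univ C) fun x _ hx => ?_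
  rw [not_not.1 (mt (hp x) hx), mul_zero]

lemma pStar_supp (S : SimStruct X) (μ : ℕ → ℝ) (y : X → ℝ) (l : ℕ) (x₀ : X) :
    ∀ x, pStar S μ y l x₀ x ≠ 0 → x ∈ S.cls l x₀ := by
  intro x hx
  by_contra h
  exact hx (if_neg h)

lemma pStar_mem_simplex (S : SimStruct X) (μ : ℕ → ℝ) (y : X → ℝ)
    (hμ : ∀ j, 1 ≤ j → j ≤ S.L → 0 < μ j) {l : ℕ} (hl : l ≤ S.L) (x₀ : X) :
    pStar S μ y l x₀ ∈ simplex X := by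
  constructor
  · intro x
    unfold pStar
    split_ifs
    · exact (condProb_pos S μ y l x).le
    · exact le_rfl
  · have h := sum_eq_of_supp (pStar_supp S μ y l x₀) (fun _ => 1)
    simp only [one_mul] at h
    rw [h, ← sum_condProb S μ y hμ hl x₀]
    exact Finset.sum_congr rfl fun x hx => pStar_of_mem S μ y hx

/-! ### The objective in terms of relative entropies -/

/-- Summation by parts along the chain of classes of `x`, stopped at level `n`. -/
lemma sum_logProb (S : SimStruct X) (μ : ℕ → ℝ) (y : X → ℝ)
    (hμ : ∀ j, 1 ≤ j → j ≤ S.L → 0 < μ j) {l n : ℕ} (hln : l ≤ n) (hn : n ≤ S.L) (x : X) :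
    ∑ j ∈ Finset.Icc (max l 1) n, (μ j - μ (j + 1)) * logProb S μ y l j x =
      score S μ y n (S.cls n x) - score S μ y l (S.cls l x) -
        μ (n + 1) * logProb S μ y l n x := by
  induction n, hln using Nat.le_induction with
  | base =>
    have h0 : logProb S μ y l l x = 0 := by simp [logProb]
    rw [h0, Finset.sum_eq_zero]
    · ring
    · intro j hj
      rw [Finset.mem_Icc] at hj
      obtain rfl : j = l := by omega
      rw [h0, mul_zero]
  | succ n hln ih =>
    rw [Finset.sum_Icc_succ_top (by omega), ih (by omega)]
    have hs : logProb S μ y l (n + 1) x = logProb S μ y l n x +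
        (score S μ y (n + 1) (S.cls (n + 1) x) - score S μ y n (S.cls n x)) / μ (n + 1) := by
      rw [logProb, Finset.sum_Ico_succ_top hln, ← logProb]
    have := (hμ (n + 1) (by omega) hn).ne'
    rw [hs]
    field_simp
    ring

/-- The relative entropy of `p` with respect to `q` on the class `C`, both coarsened to the
classes of level `j`, written as a sum over points of `C`. -/
def relEnt (S : SimStruct X) (p q : X → ℝ) (j : ℕ) (C : Finset X) : ℝ :=
  ∑ x ∈ C, p x * (Real.log (pC p (S.cls j x)) - Real.log (pC q (S.cls j x)))

/-- The nested objective is the class score minus a weighted sum of relative entropies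
with respect to the nested choice probabilities. -/
lemma objective_eq (S : SimStruct X) (μ : ℕ → ℝ) (y : X → ℝ)
    (hμ : ∀ j, 1 ≤ j → j ≤ S.L → 0 < μ j) (hμ_last : μ (S.L + 1) = 0)
    {l : ℕ} (hl : l ≤ S.L) (x₀ : X)
    {p : X → ℝ} (hp : p ∈ simplex X) (hs : ∀ x, p x ≠ 0 → x ∈ S.cls l x₀) :
    (∑ x, y x * p x) - nestEnt S μ p l (S.cls l x₀) =
      score S μ y l (S.cls l x₀) - ∑ j ∈ Finset.Icc (max l 1) S.L,
        (μ j - μ (j + 1)) * relEnt S p (pStar S μ y l x₀) j (S.cls l x₀) := by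
  have h1 : ∑ x ∈ S.cls l x₀, p x = 1 := by
    have := sum_eq_of_supp hs (fun _ => 1)
    simp only [one_mul] at this
    rw [← this, hp.2]
  have hent : nestEnt S μ p l (S.cls l x₀) = ∑ j ∈ Finset.Icc (max l 1) S.L,
      (μ j - μ (j + 1)) * ∑ x ∈ S.cls l x₀, p x * Real.log (pC p (S.cls j x)) := by
    refine Finset.sum_congr rfl fun j hj => ?_
    rw [Finset.mem_Icc] at hj
    rw [← sum_image_cls S (by omega : l ≤ j) hj.2 x₀ p (fun C' => Real.log (pC p C'))]
    simp only [xlogx, mul_comm]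
  have hlog : ∀ x ∈ S.cls l x₀, y x * p x = p x * score S μ y l (S.cls l x₀) +
      ∑ j ∈ Finset.Icc (max l 1) S.L,
        (μ j - μ (j + 1)) * (p x * Real.log (pC (pStar S μ y l x₀) (S.cls j x))) := by
    intro x hx
    have h := sum_logProb S μ y hμ hl le_rfl x
    rw [hμ_last, score_L, S.cls_congr l x₀ x hx, zero_mul, sub_zero] at h
    have h' : ∑ j ∈ Finset.Icc (max l 1) S.L,
        (μ j - μ (j + 1)) * (p x * Real.log (pC (pStar S μ y l x₀) (S.cls j x))) =
        p x * ∑ j ∈ Finset.Icc (max l 1) S.L, (μ j - μ (j + 1)) * logProb S μ y l j x := by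
      rw [Finset.mul_sum]
      refine Finset.sum_congr rfl fun j hj => ?_
      rw [Finset.mem_Icc] at hj
      rw [pC_pStar S μ y hμ (by omega) hj.2 hx, Real.log_exp]
      ring
    rw [h', h]
    ring
  rw [sum_eq_of_supp hs, Finset.sum_congr rfl hlog, Finset.sum_add_distrib, ← Finset.sum_mul, h1,
    one_mul, Finset.sum_comm, hent]
  simp only [← Finset.mul_sum, relEnt, mul_sub, Finset.sum_sub_distrib]
  ring

/-! ### Gibbs' inequality -/

lemma log_sub_log_ge {s t : ℝ} (hs : 0 < s) (ht : 0 < t) :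
    1 - t / s ≤ Real.log s - Real.log t := by
  have := Real.log_le_sub_one_of_pos (div_pos ht hs)
  rw [Real.log_div ht.ne' hs.ne'] at this
  linarith

lemma pC_pos {p : X → ℝ} (hp : ∀ x, 0 ≤ p x) {C : Finset X} {x : X} (hx : x ∈ C)
    (h : 0 < p x) : 0 < pC p C :=
  Finset.sum_pos' (fun z _ => hp z) ⟨x, hx, h⟩

lemma relEnt_nonneg (S : SimStruct X) {p q : X → ℝ} {l j : ℕ} (hlj : l ≤ j) (hj : j ≤ S.L)
    (x₀ : X) (hp : ∀ x, 0 ≤ p x) (hq : ∀ x, 0 ≤ q x) (hq' : ∀ x ∈ S.cls l x₀, 0 < q x)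
    (hpq : ∑ x ∈ S.cls l x₀, p x = ∑ x ∈ S.cls l x₀, q x) :
    0 ≤ relEnt S p q j (S.cls l x₀) := by
  have hterm : ∀ x ∈ S.cls l x₀, p x - p x * (pC q (S.cls j x) / pC p (S.cls j x)) ≤
      p x * (Real.log (pC p (S.cls j x)) - Real.log (pC q (S.cls j x))) := by
    intro x hx
    rcases (hp x).eq_or_lt with h | h
    · simp [← h]
    · have := mul_le_mul_of_nonneg_left (log_sub_log_ge (pC_pos hp (S.mem_cls j x) h)
        (pC_pos hq (S.mem_cls j x) (hq' x hx))) h.le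
      linarith
  have hgroup : ∑ x ∈ S.cls l x₀, p x * (pC q (S.cls j x) / pC p (S.cls j x)) ≤
      ∑ x ∈ S.cls l x₀, q x := by
    rw [← sum_image_cls S hlj hj x₀ p (fun C' => pC q C' / pC p C')]
    have h1 := sum_image_cls S hlj hj x₀ q (fun _ => 1)
    simp only [one_mul, mul_one] at h1
    rw [← h1]
    -- Classes with `pC p C' = 0` contribute `0` on the left, hence only an inequality.
    refine Finset.sum_le_sum fun C' _ => ?_
    by_cases h : pC p C' = 0
    · rw [h, mul_zero]
      exact Finset.sum_nonneg fun x _ => hq x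
    · rw [div_mul_cancel₀ _ h]
  have := Finset.sum_le_sum hterm
  rw [Finset.sum_sub_distrib] at this
  unfold relEnt
  linarith

/-- The equality case of Gibbs' inequality at the level of singletons. -/
lemma eq_of_relEnt_L_eq_zero (S : SimStruct X) {p q : X → ℝ} {C : Finset X}
    (hp : ∀ x, 0 ≤ p x) (hq : ∀ x ∈ C, 0 < q x)
    (hpq : ∑ x ∈ C, p x = ∑ x ∈ C, q x)
    (h0 : relEnt S p q S.L C = 0) : ∀ x ∈ C, p x = q x := by
  have hrel : ∑ x ∈ C, p x * (Real.log (p x) - Real.log (q x)) = 0 := by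
    simpa [relEnt, S.cls_L, pC] using h0
  have hterm : ∀ x ∈ C, p x - q x ≤ p x * (Real.log (p x) - Real.log (q x)) := by
    intro x hx
    rcases (hp x).eq_or_lt with h | h
    · simp [← h, (hq x hx).le]
    · have := mul_le_mul_of_nonneg_left (log_sub_log_ge h (hq x hx)) h.le
      rwa [mul_sub, mul_one, mul_div_cancel₀ _ h.ne'] at this
  have hall := (Finset.sum_eq_sum_iff_of_le hterm).1 (by
    rw [hrel, Finset.sum_sub_distrib, hpq, sub_self])
  intro x hx
  have hx' := hall x hx
  rcases (hp x).eq_or_lt with h | h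
  · rw [← h] at hx' ⊢
    linarith
  · by_contra hne
    have hlt := mul_lt_mul_of_pos_left (Real.log_lt_sub_one_of_pos (div_pos (hq x hx) h)
      (fun h1 => hne ((div_eq_one_iff_eq h.ne').1 h1).symm)) h
    rw [Real.log_div (hq x hx).ne' h.ne', mul_sub, mul_sub, mul_one, mul_div_cancel₀ _ h.ne'] at hlt
    linarith

/-! ### The maximizer -/

theorem stmt2 (S : SimStruct X) (μ : ℕ → ℝ)
    (hμ_mono : ∀ l : ℕ, 1 ≤ l → l < S.L → μ (l + 1) ≤ μ l)
    (hμ_pos : 0 < μ S.L) (hμ_last : μ (S.L + 1) = 0)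
    (l : ℕ) (hlL : l ≤ S.L) (x₀ : X) (y : X → ℝ) :
    (fun x => if x ∈ S.cls l x₀ then condProb S μ y l x else 0) ∈ simplex X ∧
    (∀ x, (if x ∈ S.cls l x₀ then condProb S μ y l x else 0) ≠ 0 → x ∈ S.cls l x₀) ∧
    (∀ p ∈ simplex X, (∀ x, p x ≠ 0 → x ∈ S.cls l x₀) →
      (∑ x, y x * p x) - nestEnt S μ p l (S.cls l x₀) ≤
        (∑ x, y x * (if x ∈ S.cls l x₀ then condProb S μ y l x else 0)) -
          nestEnt S μ (fun x => if x ∈ S.cls l x₀ then condProb S μ y l x else 0) l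
            (S.cls l x₀)) ∧
    (∀ p ∈ simplex X, (∀ x, p x ≠ 0 → x ∈ S.cls l x₀) →
      (∑ x, y x * p x) - nestEnt S μ p l (S.cls l x₀) =
        (∑ x, y x * (if x ∈ S.cls l x₀ then condProb S μ y l x else 0)) -
          nestEnt S μ (fun x => if x ∈ S.cls l x₀ then condProb S μ y l x else 0) l
            (S.cls l x₀) →
      p = fun x => if x ∈ S.cls l x₀ then condProb S μ y l x else 0) := by
  have hμ : ∀ j, 1 ≤ j → j ≤ S.L → 0 < μ j := fun j => mu_pos S μ hμ_mono hμ_pos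
  have hstar := pStar_mem_simplex S μ y hμ hlL x₀
  have hsupp := pStar_supp S μ y l x₀
  have hpos : ∀ x ∈ S.cls l x₀, 0 < pStar S μ y l x₀ x := fun x hx => by
    rw [pStar_of_mem S μ y hx]
    exact condProb_pos S μ y l x
  have hsum : ∀ p ∈ simplex X, (∀ x, p x ≠ 0 → x ∈ S.cls l x₀) →
      ∑ x ∈ S.cls l x₀, p x = 1 := by
    intro p hp hs
    have := sum_eq_of_supp hs (fun _ => 1)
    simp only [one_mul] at this
    rw [← this, hp.2]
  have hval : (∑ x, y x * pStar S μ y l x₀ x) - nestEnt S μ (pStar S μ y l x₀) l (S.cls l x₀) =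
      score S μ y l (S.cls l x₀) := by
    rw [objective_eq S μ y hμ hμ_last hlL x₀ hstar hsupp]
    simp [relEnt]
  have hcoef : ∀ j ∈ Finset.Icc (max l 1) S.L, 0 ≤ μ j - μ (j + 1) := by
    intro j hj
    rw [Finset.mem_Icc] at hj
    rcases hj.2.eq_or_lt with rfl | h
    · rw [hμ_last, sub_zero]
      exact hμ_pos.le
    · exact sub_nonneg.2 (hμ_mono j (by omega) h)
  have hterm : ∀ p ∈ simplex X, (∀ x, p x ≠ 0 → x ∈ S.cls l x₀) →
      ∀ j ∈ Finset.Icc (max l 1) S.L,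
        0 ≤ (μ j - μ (j + 1)) * relEnt S p (pStar S μ y l x₀) j (S.cls l x₀) := by
    intro p hp hs j hj
    refine mul_nonneg (hcoef j hj) ?_
    rw [Finset.mem_Icc] at hj
    exact relEnt_nonneg S (by omega) hj.2 x₀ hp.1 hstar.1 hpos
      ((hsum p hp hs).trans (hsum _ hstar hsupp).symm)
  refine ⟨hstar, hsupp, fun p hp hs => ?_, fun p hp hs heq => ?_⟩
  · refine le_trans ?_ hval.ge
    rw [objective_eq S μ y hμ hμ_last hlL x₀ hp hs]
    exact sub_le_self _ (Finset.sum_nonneg (hterm p hp hs))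
  · replace heq := heq.trans hval
    rw [objective_eq S μ y hμ hμ_last hlL x₀ hp hs, sub_eq_self,
      Finset.sum_eq_zero_iff_of_nonneg (hterm p hp hs)] at heq
    have hL := heq S.L (Finset.mem_Icc.2 ⟨max_le hlL S.one_le_L, le_rfl⟩)
    rw [hμ_last, sub_zero] at hL
    have hzero := (mul_eq_zero.1 hL).resolve_left hμ_pos.ne'
    have hC := eq_of_relEnt_L_eq_zero S hp.1 hpos
      ((hsum p hp hs).trans (hsum _ hstar hsupp).symm) hzero
    change p = pStar S μ y l x₀
    funext x
    by_cases hx : x ∈ S.cls l x₀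
    · exact hC x hx
    · rw [not_not.1 (mt (hs x) hx), not_not.1 (mt (hsupp x) hx)]

end NestedBandits
end
end

section
/- The aggregate cost estimator satisfies E[ ∑_{x∈X} p_x · ĉ_x(x̂)² ] ≤ ( ∑_{l=1}^L (N^l)^(1/2) R̄_l )² = N_eff, where the expectation is over x̂ drawn from p. -/
/-!
For each level `l` let `a l (x̂, x) = 1{x̂ ∈ C} b_C / p_C`, where `C` is the level-`l` class of `x`.
The left-hand side is the squared `L²` norm, for the product weight `p ⊗ p`, of `∑ l, a l`, so by the
triangle inequality (`weighted_sum_sq_le`) it is at most the square of the sum of the norms of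
the `a l`. Each of these is explicit (`level_second_moment`): integrating over `x̂ ∈ C` cancels one
factor `p_C`, summing `p_x` over `x ∈ C` cancels the other one, which leaves `∑_C b_C² ≤ ∑_C R_C²`,
and `∑_C R_C² = N^l R̄_l²`.
-/

noncomputable section

namespace NestedBandits

variable {X : Type*} [Fintype X] [DecidableEq X]

/-- Minkowski's inequality in `L²` of a finite weighted set, with the norms replaced by upper
bounds `s l`. -/
lemma weighted_sum_sq_le {ι κ : Type*} (I : Finset ι) (K : Finset κ) (w : ι → ℝ)
    (hw : ∀ i ∈ I, 0 ≤ w i) (a : κ → ι → ℝ) (s : κ → ℝ) (hs : ∀ l ∈ K, 0 ≤ s l)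
    (h : ∀ l ∈ K, ∑ i ∈ I, w i * a l i ^ 2 ≤ s l ^ 2) :
    ∑ i ∈ I, w i * (∑ l ∈ K, a l i) ^ 2 ≤ (∑ l ∈ K, s l) ^ 2 := by
  have e : ∑ i ∈ I, w i * (∑ l ∈ K, a l i) ^ 2
      = ∑ l ∈ K, ∑ m ∈ K, ∑ i ∈ I, w i * (a l i * a m i) := by
    simp_rw [sq, Finset.sum_mul_sum, Finset.mul_sum]
    rw [Finset.sum_comm]
    exact Finset.sum_congr rfl fun l _ => Finset.sum_comm
  rw [e, sq, Finset.sum_mul_sum]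
  refine Finset.sum_le_sum fun l hl => Finset.sum_le_sum fun m hm => ?_
  -- Cauchy–Schwarz for `√w * a l` and `√w * a m`.
  have cs := Finset.sum_mul_sq_le_sq_mul_sq I (fun i => √(w i) * a l i) (fun i => √(w i) * a m i)
  have e1 : ∀ l m, ∑ i ∈ I, √(w i) * a l i * (√(w i) * a m i)
      = ∑ i ∈ I, w i * (a l i * a m i) := fun l m =>
    Finset.sum_congr rfl fun i hi => by
      linear_combination (a l i * a m i) * Real.mul_self_sqrt (hw i hi)
  have e2 : ∀ l, ∑ i ∈ I, (√(w i) * a l i) ^ 2 = ∑ i ∈ I, w i * a l i ^ 2 := fun l =>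
    Finset.sum_congr rfl fun i hi => by rw [mul_pow, Real.sq_sqrt (hw i hi)]
  rw [e1, e2, e2] at cs
  refine abs_le_of_sq_le_sq' ?_ (mul_nonneg (hs l hl) (hs m hm)) |>.2
  rw [mul_pow]
  exact cs.trans (mul_le_mul (h l hl) (h m hm)
    (Finset.sum_nonneg fun i hi => mul_nonneg (hw i hi) (sq_nonneg _)) (sq_nonneg _))

/-- The classes of a level are the fibres of the map sending a point to its class. -/
lemma filter_cls_eq (S : SimStruct X) (l : ℕ) (z : X) :
    Finset.univ.filter (fun x => S.cls l x = S.cls l z) = S.cls l z := by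
  ext x
  simp only [Finset.mem_filter, Finset.mem_univ, true_and]
  exact ⟨fun h => h ▸ S.mem_cls l x, S.cls_congr l z x⟩

/-- Second moment of the importance-weighted estimator of a single level. -/
lemma level_second_moment (S : SimStruct X) (p : X → ℝ) (hpos : ∀ x, 0 < p x)
    (b : Finset X → ℝ) (l : ℕ) :
    ∑ q : X × X, p q.1 * p q.2 *
        (if q.1 ∈ S.cls l q.2 then b (S.cls l q.2) / pC p (S.cls l q.2) else 0) ^ 2
      = ∑ C ∈ Finset.univ.image (S.cls l), b C ^ 2 := by
  have hC : ∀ z, 0 < pC p (S.cls l z) := fun z =>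
    Finset.sum_pos (fun x _ => hpos x) ⟨z, S.mem_cls l z⟩
  have inner : ∀ x, ∑ y, p y * p x *
      (if y ∈ S.cls l x then b (S.cls l x) / pC p (S.cls l x) else 0) ^ 2
      = p x * (b (S.cls l x) ^ 2 / pC p (S.cls l x)) := by
    intro x
    have : ∀ y, p y * p x *
        (if y ∈ S.cls l x then b (S.cls l x) / pC p (S.cls l x) else 0) ^ 2
        = (if y ∈ S.cls l x then p y else 0) *
          (p x * (b (S.cls l x) / pC p (S.cls l x)) ^ 2) := by
      intro y; split_ifs <;> ring
    simp_rw [this]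
    rw [← Finset.sum_mul, Finset.sum_ite_mem, Finset.univ_inter]
    change pC p (S.cls l x) * _ = _
    have := (hC x).ne'
    field_simp
  rw [Fintype.sum_prod_type_right]
  simp_rw [inner]
  rw [← Finset.sum_fiberwise_of_maps_to (g := S.cls l) (t := Finset.univ.image (S.cls l))
    (fun x hx => Finset.mem_image_of_mem _ hx)]
  refine Finset.sum_congr rfl fun C hCm => ?_
  obtain ⟨z, -, rfl⟩ := Finset.mem_image.1 hCm
  rw [filter_cls_eq]
  have : ∀ x ∈ S.cls l z, p x * (b (S.cls l x) ^ 2 / pC p (S.cls l x))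
      = p x * (b (S.cls l z) ^ 2 / pC p (S.cls l z)) := fun x hx => by
    rw [S.cls_congr l z x hx]
  rw [Finset.sum_congr rfl this, ← Finset.sum_mul]
  change pC p (S.cls l z) * _ = _
  exact mul_div_cancel₀ _ (hC z).ne'

theorem stmt9 (S : SimStruct X) (p : X → ℝ) (hp : p ∈ simplex X)
    (hpos : ∀ x, 0 < p x) (b R : ℕ → Finset X → ℝ)
    (hb : ∀ l ∈ Finset.Icc 1 S.L, ∀ x : X,
      0 ≤ b l (S.cls l x) ∧ b l (S.cls l x) ≤ R l (S.cls l x)) :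
    (∑ xh, p xh * ∑ x, p x *
        (∑ l ∈ Finset.Icc 1 S.L,
          if xh ∈ S.cls l x then b l (S.cls l x) / pC p (S.cls l x) else 0) ^ 2) ≤
      Neff S R := by
  have key := weighted_sum_sq_le (Finset.univ : Finset (X × X)) (Finset.Icc 1 S.L)
    (fun q => p q.1 * p q.2) (fun q _ => (mul_pos (hpos _) (hpos _)).le)
    (fun l q => if q.1 ∈ S.cls l q.2 then b l (S.cls l q.2) / pC p (S.cls l q.2) else 0)
    (fun l => Real.sqrt ((Finset.univ.image (S.cls l)).card) *
        Real.sqrt ((∑ C ∈ Finset.univ.image (S.cls l), R l C ^ 2) /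
          ((Finset.univ.image (S.cls l)).card)))
    (fun l _ => by positivity) ?_
  · refine le_trans (le_of_eq ?_) key
    rw [Fintype.sum_prod_type]
    refine Finset.sum_congr rfl fun y _ => ?_
    rw [Finset.mul_sum]
    exact Finset.sum_congr rfl fun x _ => (mul_assoc _ _ _).symm
  · intro l hl
    rw [level_second_moment S p hpos (b l) l]
    have hle : ∑ C ∈ Finset.univ.image (S.cls l), b l C ^ 2
        ≤ ∑ C ∈ Finset.univ.image (S.cls l), R l C ^ 2 := by
      refine Finset.sum_le_sum fun C hCm => ?_
      obtain ⟨z, -, rfl⟩ := Finset.mem_image.1 hCm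
      exact pow_le_pow_left₀ (hb l hl z).1 (hb l hl z).2 2
    -- A point of `X` exists because `p` sums to one, so the number of classes is nonzero.
    have hX : Nonempty X := by
      by_contra hne
      rw [not_nonempty_iff] at hne
      simpa using hp.2
    have hN : ((Finset.univ.image (S.cls l)).card : ℝ) ≠ 0 :=
      Nat.cast_ne_zero.2 (Finset.card_pos.2 (Finset.univ_nonempty.image _)).ne'
    rw [mul_pow, Real.sq_sqrt (Nat.cast_nonneg _), Real.sq_sqrt (by positivity),
      mul_div_cancel₀ _ hN]
    exact hle

end NestedBandits
end
end
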